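/- arXiv:1608.08580 — 2 statements merged into one kernel-verified Lean document; each statement's English description precedes it below -/
import Mathlib

section
/- Let R be a Noetherian commutative ring of finite Krull dimension d and M a finitely generated R-module. Then for each n ∈ ℕ, n·frk(M) ≤ frk(M^{⊕n}) ≤ n·frk(M) + n·d, where frk denotes the maximal rank of a free direct summand. -/
/-- The free rank of a module: the maximal rank of a free direct summand. -/
noncomputable def frk (R M : Type*) [Ring R] [AddCommGroup M] [Module R M] : ℕ :=
  sSup {n : ℕ | ∃ N N' : Submodule R M, IsCompl N N' ∧ Nonempty (N ≃ₗ[R] (Fin n → R))}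

/-!
Summing splittings of `M` gives the lower bound. For the upper bound, a splitting of `R ^ k` off
`M ^ n` consists of `k` functionals and `k` vectors with pairing matrix `1`. Pairing all components
of the functionals with all components of the vectors gives a matrix `A` whose `n` diagonal `k × k`
blocks sum to `1`, so that `k ≤ n * rank A` at every prime.

It remains to find a prime at which the rank of `A` is at most `frk M + d`. If the rank exceeded
this at every prime, `R ^ (frk M + 1)` would split off `M`: as long as the rank is greater than `d`
everywhere, Kronecker's theorem (every finitely generated ideal of a ring of dimension `d` is, up to
radical, generated by `d + 1` elements) yields combinations of the functionals and of the vectors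
that pair to `1`, and passing to the kernel lowers the rank by at most one. Kronecker's theorem
itself follows by induction on the dimension, through quotients by Krull boundary ideals.
-/

lemma ringKrullDim_quotient_add_one_le {R : Type*} [CommRing R] {I : Ideal R}
    (hI : ∀ p ∈ minimalPrimes R, ¬ I ≤ p) : ringKrullDim (R ⧸ I) + 1 ≤ ringKrullDim R := by
  rcases isEmpty_or_nonempty (PrimeSpectrum.zeroLocus (I : Set R)) with _ | _
  · rw [ringKrullDim_quotient, Order.krullDim_eq_bot, WithBot.bot_add]
    exact bot_le
  rw [ringKrullDim_quotient, Order.krullDim_eq_iSup_length, ← WithBot.coe_one, ← WithBot.coe_add,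
    ENat.iSup_add]
  have : Nonempty (PrimeSpectrum R) := ‹Nonempty (PrimeSpectrum.zeroLocus _)›.map Subtype.val
  rw [ringKrullDim, Order.krullDim_eq_iSup_length, WithBot.coe_le_coe, iSup_le_iff]
  intro l
  obtain ⟨p, hp, hpl⟩ := Ideal.exists_minimalPrimes_le (J := l.head.1.asIdeal) bot_le
  let p' : PrimeSpectrum R := ⟨p, hp.isPrime⟩
  have hlt : p' < l.head :=
    lt_of_le_of_ne hpl fun h => hI p hp (by simpa [← h, p'] using l.head.2)
  let l' : LTSeries (PrimeSpectrum R) := (l.map Subtype.val (Subtype.strictMono_coe _)).cons p' hlt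
  have hl' : l'.length = l.length + 1 := RelSeries.cons_length _ _ _
  exact le_iSup_of_le l' (by rw [hl', Nat.cast_add_one])

section Kronecker

variable {R : Type*} [CommRing R]

/-- The Krull boundary ideal of `b`: its zero locus is the topological boundary of the zero locus
of `b` in the prime spectrum, and passing to its quotient is what makes dimension drop. -/
def krullBoundary (b : R) : Ideal R :=
  (nilradical R).colon {b} ⊔ Ideal.span {b}

lemma not_krullBoundary_le_of_mem_minimalPrimes (b : R) {p : Ideal R} (hp : p ∈ minimalPrimes R) :
    ¬ krullBoundary b ≤ p := by
  intro hle
  have := hp.isPrime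
  have hb : b ∈ p := hle (Ideal.mem_sup_right (Ideal.mem_span_singleton_self b))
  have hloc : algebraMap R (Localization.AtPrime p) b ∈
      ((⊥ : Ideal R).map (algebraMap R (Localization.AtPrime p))).radical := by
    rw [IsLocalization.AtPrime.radical_map_of_mem_minimalPrimes _ p ⊥ hp]
    exact Ideal.mem_map_of_mem _ hb
  obtain ⟨k, hk⟩ := hloc
  rw [Ideal.map_bot, Ideal.mem_bot, ← map_pow,
    IsLocalization.map_eq_zero_iff p.primeCompl] at hk
  obtain ⟨⟨s, hs⟩, hsb⟩ := hk
  have hnil : s * b ∈ nilradical R := ⟨k + 1, by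
    calc (s * b) ^ (k + 1) = s ^ k * b * (s * b ^ k) := by ring
      _ = 0 := by rw [hsb, mul_zero]⟩
  exact hs (hle (Ideal.mem_sup_left (Submodule.mem_colon_singleton.2 hnil)))

lemma ringKrullDim_quotient_krullBoundary_add_one_le (b : R) :
    ringKrullDim (R ⧸ krullBoundary b) + 1 ≤ ringKrullDim R :=
  ringKrullDim_quotient_add_one_le fun _ => not_krullBoundary_le_of_mem_minimalPrimes b

lemma exists_mem_radical_sup_span_add_mul {J : Ideal R} {a b : R}
    (ha : a ∈ (J ⊔ krullBoundary b).radical) :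
    ∃ s, a ∈ (J ⊔ Ideal.span {b + a * s}).radical := by
  obtain ⟨k, hk⟩ := ha
  rw [krullBoundary, ← sup_assoc] at hk
  obtain ⟨y, hy, z, hz, hyz⟩ := Submodule.mem_sup.1 hk
  obtain ⟨j, hj, s, hs, rfl⟩ := Submodule.mem_sup.1 hy
  refine ⟨s, ?_⟩
  rw [Ideal.radical_eq_sInf, Ideal.mem_sInf]
  rintro p ⟨hle, hp⟩
  have hbas : b + a * s ∈ p := hle (Ideal.mem_sup_right (Ideal.mem_span_singleton_self _))
  have hsb : s * b ∈ p := nilradical_le_prime p (Submodule.mem_colon_singleton.1 hs)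
  by_contra hap
  have hb : b ∈ p := by
    refine (hp.mem_or_mem hsb).elim (fun hsp => ?_) id
    exact (p.add_mem_iff_left (p.mul_mem_left a hsp)).1 hbas
  have hsp : s ∈ p := (hp.mem_or_mem ((p.add_mem_iff_right hb).1 hbas)).resolve_left hap
  refine hap (hp.mem_of_pow_mem k (hyz ▸ p.add_mem (p.add_mem ?_ hsp) ?_))
  · exact hle (Ideal.mem_sup_left hj)
  · exact p.span_singleton_le_iff_mem.2 hb hz

/-- **Kronecker's theorem**. -/
theorem exists_mem_radical_span_range_add_smul {n : ℕ} (hR : ringKrullDim R < n) (a : R)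
    (b : Fin n → R) : ∃ x : Fin n → R, a ∈ (Ideal.span (Set.range (b + a • x))).radical := by
  induction n generalizing R with
  | zero =>
    have : Subsingleton R := by
      rw [← not_nontrivial_iff_subsingleton]
      exact fun _ => hR.not_ge ringKrullDim_nonneg_of_nontrivial
    exact ⟨0, by rw [Subsingleton.elim a 0]; exact zero_mem _⟩
  | succ n ih =>
    let π := Ideal.Quotient.mk (krullBoundary (b 0))
    have hdim : ringKrullDim (R ⧸ krullBoundary (b 0)) < n :=
      lt_of_add_lt_add_right ((ringKrullDim_quotient_krullBoundary_add_one_le (b 0)).trans_lt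
        (by exact_mod_cast hR))
    obtain ⟨x', k, hk⟩ := ih hdim (π a) (π ∘ Fin.tail b)
    obtain ⟨x, rfl⟩ := Ideal.Quotient.mk_surjective.comp_left x'
    let J := Ideal.span (Set.range (Fin.tail b + a • x))
    have ha : a ∈ (J ⊔ krullBoundary (b 0)).radical := by
      refine ⟨k, Ideal.mem_quotient_iff_mem_sup.1 ?_⟩
      have hπ : π ∘ (Fin.tail b + a • x) = π ∘ Fin.tail b + π a • (π ∘ x) := by
        ext i
        simp
      rwa [Ideal.map_span, ← Set.range_comp, map_pow, hπ]
    obtain ⟨s, hs⟩ := exists_mem_radical_sup_span_add_mul ha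
    refine ⟨Fin.cons s x, Ideal.radical_mono (sup_le ?_ ?_) hs⟩
    · refine Ideal.span_mono ?_
      rintro _ ⟨i, rfl⟩
      exact ⟨i.succ, by simp [Fin.tail]⟩
    · exact Ideal.span_mono (Set.singleton_subset_iff.2 ⟨0, by simp⟩)

end Kronecker

section Minors

open Matrix

variable {m n : Type*}

lemma exists_linearIndependent_row_submatrix {K : Type*} [Field K] [Finite m] [Fintype n]
    (A : Matrix m n K) {r : ℕ} (hr : r ≤ A.rank) :
    ∃ f : Fin r → m, LinearIndependent K (A.submatrix f id).row := by
  rw [rank_eq_finrank_span_row] at hr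
  obtain ⟨g, hg, -, hli⟩ := Submodule.exists_fun_fin_finrank_span_eq K (Set.range A.row)
  choose f hf using hg
  refine ⟨f ∘ Fin.castLE hr, ?_⟩
  have hrow : (A.submatrix (f ∘ Fin.castLE hr) id).row = g ∘ Fin.castLE hr :=
    funext fun i => hf (Fin.castLE hr i)
  rw [hrow]
  exact hli.comp _ (Fin.castLE_injective hr)

lemma exists_det_submatrix_ne_zero {K : Type*} [Field K] [Finite m] [Fintype n]
    (A : Matrix m n K) {r : ℕ} (hr : r ≤ A.rank) :
    ∃ (f : Fin r → m) (g : Fin r → n), (A.submatrix f g).det ≠ 0 := by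
  obtain ⟨f, hf⟩ := exists_linearIndependent_row_submatrix A hr
  have hr' : r ≤ ((A.submatrix f id)ᵀ).rank := by
    rw [rank_transpose, hf.rank_matrix, Fintype.card_fin]
  obtain ⟨g, hg⟩ := exists_linearIndependent_row_submatrix _ hr'
  refine ⟨f, g, ?_⟩
  rw [linearIndependent_rows_iff_isUnit, isUnit_iff_isUnit_det, isUnit_iff_ne_zero] at hg
  rwa [← det_transpose]

variable {R : Type*} [CommRing R]

lemma span_range_mulVec_le [Fintype n] (A : Matrix m n R) (v : n → R) :
    Ideal.span (Set.range (A *ᵥ v)) ≤ Ideal.span (Set.range v) := by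
  rw [Ideal.span_le]
  rintro _ ⟨i, rfl⟩
  exact Ideal.sum_mem _ fun j _ => Ideal.mul_mem_left _ _ (Ideal.subset_span ⟨j, rfl⟩)

-- Kronecker's theorem is applied to `δ ^ 2` and `adj *ᵥ (A *ᵥ w)` on the rows `f`: adding `δ` times
-- a combination of the columns `g` to `w` changes the latter by a multiple of `δ ^ 2`, because the
-- adjugate turns these columns into `δ • 1`.
lemma exists_det_mem_radical_span_range_mulVec [Fintype n] {r : ℕ} (hR : ringKrullDim R < r)
    (A : Matrix m n R) (f : Fin r → m) (g : Fin r → n) (w : n → R) :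
    ∃ w' : n → R, (A.submatrix f g).det ∈ (Ideal.span (Set.range (A *ᵥ w'))).radical ∧
      Ideal.span (Set.range (A *ᵥ w)) ≤ (Ideal.span (Set.range (A *ᵥ w'))).radical := by
  classical
  set G := A.submatrix f g
  set δ := G.det
  obtain ⟨y, hy⟩ := exists_mem_radical_span_range_add_smul hR (δ ^ 2)
    (G.adjugate *ᵥ ((A *ᵥ w) ∘ f))
  let w' := w + δ • ((1 : Matrix n n R).submatrix id g *ᵥ y)
  have hw' : A *ᵥ w' = A *ᵥ w + δ • (A.submatrix id g *ᵥ y) := by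
    have hA : A * (1 : Matrix n n R).submatrix id g = A.submatrix id g := by
      ext i j
      simp [mul_apply, one_apply]
    rw [mulVec_add, mulVec_smul, mulVec_mulVec, hA]
  have hadj : G.adjugate *ᵥ ((A *ᵥ w) ∘ f) + δ ^ 2 • y = G.adjugate *ᵥ ((A *ᵥ w') ∘ f) := by
    have hf : (A *ᵥ w') ∘ f = (A *ᵥ w) ∘ f + δ • (G *ᵥ y) := by rw [hw']; rfl
    rw [hf, mulVec_add, mulVec_smul, mulVec_mulVec, adjugate_mul, smul_mulVec, one_mulVec,
      smul_smul, sq]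
  have hδ : δ ∈ (Ideal.span (Set.range (A *ᵥ w'))).radical := by
    refine Ideal.mem_radical_of_pow_mem (Ideal.radical_mono ?_ hy)
    rw [hadj]
    exact (span_range_mulVec_le _ _).trans (Ideal.span_mono (Set.range_comp_subset_range _ _))
  refine ⟨w', hδ, Ideal.span_le.2 ?_⟩
  rintro _ ⟨i, rfl⟩
  have hi : (A *ᵥ w) i = (A *ᵥ w') i - δ * (A.submatrix id g *ᵥ y) i := by
    rw [hw', Pi.add_apply, Pi.smul_apply, smul_eq_mul, add_sub_cancel_right]
  rw [SetLike.mem_coe, hi]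
  exact sub_mem (Ideal.le_radical (Ideal.subset_span ⟨i, rfl⟩)) (Ideal.mul_mem_right _ _ hδ)

/-- The ideal generated by the `r × r` minors of `A`. Rows and columns are chosen by arbitrary
maps; the choices with repetitions only contribute zeros. -/
def minorIdeal (A : Matrix m n R) (r : ℕ) : Ideal R :=
  Ideal.span (Set.range fun s : (Fin r → m) × (Fin r → n) => (A.submatrix s.1 s.2).det)

lemma exists_minorIdeal_le_radical_span_range_mulVec [Finite m] [Fintype n] {r : ℕ}
    (hR : ringKrullDim R < r) (A : Matrix m n R) :
    ∃ w : n → R, minorIdeal A r ≤ (Ideal.span (Set.range (A *ᵥ w))).radical := by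
  classical
  have := Fintype.ofFinite m
  suffices ∀ S : Finset ((Fin r → m) × (Fin r → n)), ∃ w : n → R, ∀ s ∈ S,
      (A.submatrix s.1 s.2).det ∈ (Ideal.span (Set.range (A *ᵥ w))).radical by
    obtain ⟨w, hw⟩ := this Finset.univ
    exact ⟨w, Ideal.span_le.2 (Set.range_subset_iff.2 fun s => hw s (Finset.mem_univ s))⟩
  intro S
  induction S using Finset.induction_on with
  | empty => exact ⟨0, by simp⟩
  | insert s S _ ih =>
    obtain ⟨w, hw⟩ := ih
    obtain ⟨w', hdet, hle⟩ := exists_det_mem_radical_span_range_mulVec hR A s.1 s.2 w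
    refine ⟨w', Finset.forall_mem_insert _ _ _ |>.2 ⟨hdet, fun t ht => ?_⟩⟩
    exact (Ideal.radical_isRadical _).radical_le_iff.2 hle (hw t ht)

end Minors

section RankAt

open Matrix

variable {R m n : Type*} [CommRing R] [Fintype n]

/-- The rank of the matrix `A` at the prime `p`, that is, over the residue field of `p`. -/
noncomputable def rankAt (A : Matrix m n R) (p : PrimeSpectrum R) : ℕ :=
  (A.map (algebraMap R p.asIdeal.ResidueField)).rank

lemma rankAt_one [DecidableEq n] (p : PrimeSpectrum R) :
    rankAt (1 : Matrix n n R) p = Fintype.card n := by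
  rw [rankAt, Matrix.map_one _ (map_zero _) (map_one _), rank_one]

lemma rankAt_submatrix_le {m₀ n₀ : Type*} [Fintype n₀] (A : Matrix m n R) (f : m₀ → m) (g : n₀ → n)
    (p : PrimeSpectrum R) : rankAt (A.submatrix f g) p ≤ rankAt A p := by
  rw [rankAt, ← submatrix_map]
  exact rank_submatrix_le _ _ _

lemma rankAt_vecMulVec_le (u : m → R) (v : n → R) (p : PrimeSpectrum R) :
    rankAt (vecMulVec u v) p ≤ 1 := by
  rw [rankAt, vecMulVec_eq Unit, Matrix.map_mul]
  exact (rank_mul_le_left _ _).trans (rank_le_card_width _)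

lemma rankAt_add_le [Finite m] (A B : Matrix m n R) (p : PrimeSpectrum R) :
    rankAt (A + B) p ≤ rankAt A p + rankAt B p := by
  rw [rankAt, Matrix.map_add _ (map_add _), Matrix.rank, mulVecLin_add]
  exact (Submodule.finrank_mono (LinearMap.range_add_le _ _)).trans
    (Submodule.finrank_add_le_finrank_add_finrank _ _)

lemma rankAt_sum_le [Finite m] {ι : Type*} (s : Finset ι) (A : ι → Matrix m n R)
    (p : PrimeSpectrum R) : rankAt (∑ i ∈ s, A i) p ≤ ∑ i ∈ s, rankAt (A i) p :=
  Finset.le_sum_of_subadditive (rankAt · p) (by simp [rankAt]) (rankAt_add_le · · p) s A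

lemma not_minorIdeal_le_of_le_rankAt [Finite m] {A : Matrix m n R} {r : ℕ} {p : PrimeSpectrum R}
    (hA : r ≤ rankAt A p) : ¬ minorIdeal A r ≤ p.asIdeal := by
  intro hle
  obtain ⟨f, g, hfg⟩ := exists_det_submatrix_ne_zero _ hA
  refine hfg ?_
  rw [submatrix_map, ← RingHom.mapMatrix_apply, ← RingHom.map_det,
    Ideal.algebraMap_residueField_eq_zero]
  exact hle (Ideal.subset_span ⟨(f, g), rfl⟩)

lemma exists_dotProduct_mulVec_eq_one [Fintype m] {r : ℕ} (hR : ringKrullDim R < r)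
    (A : Matrix m n R) (hA : ∀ p, r ≤ rankAt A p) :
    ∃ (u : m → R) (w : n → R), u ⬝ᵥ A *ᵥ w = 1 := by
  obtain ⟨w, hw⟩ := exists_minorIdeal_le_radical_span_range_mulVec hR A
  have htop : Ideal.span (Set.range (A *ᵥ w)) = ⊤ := by
    by_contra hne
    obtain ⟨p, hp, hle⟩ := Ideal.exists_le_maximal _ hne
    exact not_minorIdeal_le_of_le_rankAt (hA ⟨p, hp.isPrime⟩)
      (hw.trans (hp.isPrime.radical_le_iff.2 hle))
  obtain ⟨u, hu⟩ := Ideal.mem_span_range_iff_exists_fun.1 ((Ideal.eq_top_iff_one _).1 htop)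
  exact ⟨u, w, hu⟩

end RankAt

section FreeSummand

open Matrix

variable {R M ι κ : Type*} [CommRing R] [AddCommGroup M] [Module R M]

/-- The matrix of values `f i (x j)` of a family of functionals on a family of vectors. -/
def pairingMatrix (f : ι → Module.Dual R M) (x : κ → M) : Matrix ι κ R :=
  Matrix.of fun i j => f i (x j)

/-- `R ^ k` is isomorphic to a direct summand of `M`. The splitting `R ^ k → M → R ^ k` is encoded
by the images in `M` of the standard basis vectors and the coordinates of the retraction. -/
def HasFreeSummand (R M : Type*) [CommRing R] [AddCommGroup M] [Module R M] (k : ℕ) : Prop :=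
  ∃ (f : Fin k → Module.Dual R M) (x : Fin k → M), pairingMatrix f x = 1

lemma hasFreeSummand_card [Fintype ι] [DecidableEq ι] {f : ι → Module.Dual R M} {x : ι → M}
    (h : pairingMatrix f x = 1) : HasFreeSummand R M (Fintype.card ι) := by
  let e := (Fintype.equivFin ι).symm
  refine ⟨f ∘ e, x ∘ e, ?_⟩
  calc pairingMatrix (f ∘ e) (x ∘ e) = (pairingMatrix f x).submatrix e e := rfl
    _ = 1 := by rw [h, submatrix_one_equiv]

lemma hasFreeSummand_zero : HasFreeSummand R M 0 :=
  ⟨0, 0, Subsingleton.elim _ _⟩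

lemma pi_comp_linearCombination_eq_id [Fintype ι] [DecidableEq ι] {f : ι → Module.Dual R M}
    {x : ι → M} (h : pairingMatrix f x = 1) :
    LinearMap.pi f ∘ₗ Fintype.linearCombination R x = LinearMap.id := by
  refine LinearMap.pi_ext' fun j => LinearMap.ext_ring (funext fun i => ?_)
  simpa [pairingMatrix, one_apply, Pi.single_apply] using congrFun₂ h i j

lemma hasFreeSummand_iff_exists_isCompl {k : ℕ} :
    HasFreeSummand R M k ↔
      ∃ N N' : Submodule R M, IsCompl N N' ∧ Nonempty (N ≃ₗ[R] (Fin k → R)) := by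
  constructor
  · rintro ⟨f, x, h⟩
    let p := LinearMap.pi f
    let i := Fintype.linearCombination R x
    have hpi (y) : p (i y) = y := LinearMap.congr_fun (pi_comp_linearCombination_eq_id h) y
    refine ⟨LinearMap.range i, LinearMap.ker (i.rangeRestrict ∘ₗ p), LinearMap.isCompl_of_proj ?_,
      ⟨(LinearEquiv.ofInjective i (Function.LeftInverse.injective hpi)).symm⟩⟩
    rintro ⟨_, y, rfl⟩
    exact Subtype.ext (congrArg i (hpi y))
  · rintro ⟨N, N', hN, ⟨e⟩⟩
    refine ⟨fun i => LinearMap.proj i ∘ₗ e.toLinearMap ∘ₗ N.projectionOnto N' hN,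
      fun j => e.symm (Pi.single j 1), ?_⟩
    ext i j
    simp [pairingMatrix, one_apply, Pi.single_apply]

lemma frk_eq_sSup : frk R M = sSup {k | HasFreeSummand R M k} := by
  simp only [frk, hasFreeSummand_iff_exists_isCompl]

lemma bddAbove_hasFreeSummand [Nontrivial R] [Module.Finite R M] :
    BddAbove {k | HasFreeSummand R M k} := by
  obtain ⟨a, g, hg⟩ := Module.Finite.exists_fin' R M
  refine ⟨a, fun k ⟨f, x, h⟩ => le_of_fin_surjective R (LinearMap.pi f ∘ₗ g) ?_⟩
  have hpi : Function.Surjective (LinearMap.pi f) := Function.RightInverse.surjective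
    fun y => LinearMap.congr_fun (pi_comp_linearCombination_eq_id h) y
  exact hpi.comp hg

lemma HasFreeSummand.pi [Fintype ι] {k : ℕ} (h : HasFreeSummand R M k) :
    HasFreeSummand R (ι → M) (Fintype.card ι * k) := by
  classical
  obtain ⟨f, x, hfx⟩ := h
  have hcard : Fintype.card (ι × Fin k) = Fintype.card ι * k := by simp
  rw [← hcard]
  refine hasFreeSummand_card (f := fun s : ι × Fin k => f s.2 ∘ₗ LinearMap.proj s.1)
    (x := fun s => Pi.single s.1 (x s.2)) ?_
  ext ⟨i, a⟩ ⟨j, b⟩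
  rcases eq_or_ne i j with rfl | hij
  · simpa [pairingMatrix, one_apply] using congrFun₂ hfx a b
  · simp [pairingMatrix, one_apply, hij]

/-- The projection of `M` onto the kernel of `f` along `x`, where `f x = 1`. -/
def kerProj (f : Module.Dual R M) (x : M) (h : f x = 1) : M →ₗ[R] LinearMap.ker f :=
  (LinearMap.id - f.smulRight x).codRestrict _ fun y => by simp [h]

lemma coe_kerProj (f : Module.Dual R M) (x : M) (h : f x = 1) (y : M) :
    (kerProj f x h y : M) = y - f y • x :=
  rfl

lemma HasFreeSummand.succ_of_ker {k : ℕ} {f₀ : Module.Dual R M} {x₀ : M} (h₀ : f₀ x₀ = 1)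
    (h : HasFreeSummand R (LinearMap.ker f₀) k) : HasFreeSummand R M (k + 1) := by
  obtain ⟨f, x, hfx⟩ := h
  have hproj_x₀ : kerProj f₀ x₀ h₀ x₀ = 0 := Subtype.ext (by simp [coe_kerProj, h₀])
  have hproj (j) : kerProj f₀ x₀ h₀ (x j) = x j := Subtype.ext (by simp [coe_kerProj])
  refine ⟨Fin.cons f₀ fun i => f i ∘ₗ kerProj f₀ x₀ h₀, Fin.cons x₀ fun j => x j, ?_⟩
  ext i j
  cases i using Fin.cases with
  | zero =>
    cases j using Fin.cases with
    | zero => simp [pairingMatrix, h₀]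
    | succ j => simp [pairingMatrix, one_apply, (Fin.succ_ne_zero j).symm]
  | succ i =>
    cases j using Fin.cases with
    | zero => simp [pairingMatrix, hproj_x₀]
    | succ j => simpa [pairingMatrix, hproj, one_apply] using congrFun₂ hfx i j

/-- A form of **Serre's splitting theorem**. Projecting the vectors to the kernel of the functional
that is split off subtracts a matrix of rank at most one from the pairing matrix. -/
theorem hasFreeSummand_of_le_rankAt [Finite ι] [Fintype κ] {d s : ℕ} (hR : ringKrullDim R ≤ d)
    (f : ι → Module.Dual R M) (x : κ → M) (h : ∀ p, d + s ≤ rankAt (pairingMatrix f x) p) :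
    HasFreeSummand R M s := by
  induction s generalizing M with
  | zero => exact hasFreeSummand_zero
  | succ s ih =>
    have := Fintype.ofFinite ι
    set A := pairingMatrix f x
    have hd : ringKrullDim R < (d + 1 : ℕ) := hR.trans_lt (by exact_mod_cast d.lt_succ_self)
    obtain ⟨u, w, huw⟩ := exists_dotProduct_mulVec_eq_one hd A fun p => le_trans (by lia) (h p)
    let f₀ : Module.Dual R M := ∑ i, u i • f i
    let x₀ : M := ∑ j, w j • x j
    have hfx₀ (i) : f i x₀ = (A *ᵥ w) i := by
      simp [x₀, A, pairingMatrix, mulVec, dotProduct, mul_comm]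
    have hf₀x (j) : f₀ (x j) = (u ᵥ* A) j := by
      simp [f₀, A, pairingMatrix, vecMul, dotProduct]
    have h₀ : f₀ x₀ = 1 := by
      rw [← huw]
      simp [f₀, hfx₀, dotProduct]
    let f' (i : ι) : Module.Dual R (LinearMap.ker f₀) := f i ∘ₗ (LinearMap.ker f₀).subtype
    let x' (j : κ) : LinearMap.ker f₀ := kerProj f₀ x₀ h₀ (x j)
    have hA : A = pairingMatrix f' x' + vecMulVec (A *ᵥ w) (u ᵥ* A) := by
      ext i j
      simp [pairingMatrix, f', x', coe_kerProj, hfx₀, hf₀x, vecMulVec_apply, A, mul_comm]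
    refine (ih f' x' fun p => ?_).succ_of_ker h₀
    have hp := h p
    have hadd := rankAt_add_le (pairingMatrix f' x') (vecMulVec (A *ᵥ w) (u ᵥ* A)) p
    rw [← hA] at hadd
    have hone := rankAt_vecMulVec_le (A *ᵥ w) (u ᵥ* A) p
    lia

lemma HasFreeSummand.le_mul_of_pi [Fintype ι] {d m k : ℕ} (hR : ringKrullDim R ≤ d)
    (hM : ¬ HasFreeSummand R M (m + 1)) (h : HasFreeSummand R (ι → M) k) :
    k ≤ Fintype.card ι * (m + d) := by
  classical
  obtain ⟨f, x, hfx⟩ := h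
  let A : Matrix (ι × Fin k) (ι × Fin k) R :=
    pairingMatrix (fun s => f s.2 ∘ₗ LinearMap.single R (fun _ => M) s.1) fun s => x s.2 s.1
  obtain ⟨p, hp⟩ : ∃ p, rankAt A p ≤ m + d := by
    by_contra! hlt
    exact hM (hasFreeSummand_of_le_rankAt hR _ _ fun p => (by lia : _ ≤ m + d + 1).trans (hlt p))
  have hsum : (1 : Matrix (Fin k) (Fin k) R) = ∑ i, A.submatrix (i, ·) (i, ·) := by
    rw [← hfx]
    ext a b
    simp only [A, pairingMatrix, Matrix.sum_apply, submatrix_apply, of_apply,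
      LinearMap.comp_apply, LinearMap.coe_single, ← map_sum, Finset.univ_sum_single]
  calc k = rankAt (1 : Matrix (Fin k) (Fin k) R) p := by rw [rankAt_one, Fintype.card_fin]
    _ ≤ ∑ i : ι, rankAt (A.submatrix (i, ·) (i, ·)) p := hsum ▸ rankAt_sum_le _ _ p
    _ ≤ ∑ _i : ι, (m + d) :=
      Finset.sum_le_sum fun i _ => (rankAt_submatrix_le A _ _ p).trans hp
    _ = Fintype.card ι * (m + d) := by simp

end FreeSummand

theorem frk_pow_bounds_general {R : Type*} [CommRing R] (d : ℕ) (hd : ringKrullDim R = d)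
    (M : Type*) [AddCommGroup M] [Module R M] (hM : BddAbove {k | HasFreeSummand R M k}) (n : ℕ) :
    n * frk R M ≤ frk R (Fin n → M) ∧ frk R (Fin n → M) ≤ n * frk R M + n * d := by
  have hmem : HasFreeSummand R M (frk R M) :=
    frk_eq_sSup (R := R) (M := M) ▸ Nat.sSup_mem ⟨0, hasFreeSummand_zero⟩ hM
  have hsucc : ¬ HasFreeSummand R M (frk R M + 1) := fun h =>
    (frk R M).not_succ_le_self ((le_csSup hM h).trans_eq frk_eq_sSup.symm)
  have hpi : n * frk R M + n * d ∈ upperBounds {k | HasFreeSummand R (Fin n → M) k} :=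
    fun k hk => by simpa [mul_add] using HasFreeSummand.le_mul_of_pi hd.le hsucc hk
  rw [frk_eq_sSup (M := Fin n → M)]
  exact ⟨le_csSup ⟨_, hpi⟩ (by simpa using hmem.pi (ι := Fin n)),
    csSup_le ⟨0, hasFreeSummand_zero⟩ hpi⟩

/-- For a Noetherian ring `R` of finite Krull dimension `d` and a finitely generated
module `M`, one has `n·frk(M) ≤ frk(M^{⊕n}) ≤ n·frk(M) + n·d` for every `n`. -/
theorem frk_pow_bounds {R : Type*} [CommRing R] [IsNoetherianRing R] (d : ℕ)
    (hd : ringKrullDim R = d) (M : Type*) [AddCommGroup M] [Module R M]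
    [Module.Finite R M] (n : ℕ) :
    n * frk R M ≤ frk R (Fin n → M) ∧ frk R (Fin n → M) ≤ n * frk R M + n * d := by
  have : Nontrivial R := not_subsingleton_iff_nontrivial.1 fun _ => by
    simp [ringKrullDim_eq_bot_of_subsingleton] at hd
  exact frk_pow_bounds_general d hd M bddAbove_hasFreeSummand n
end

section
/- Let R be a Noetherian ring of finite Krull dimension and M' → M → M'' → 0 a right exact sequence of finitely generated R-modules. Then frk(M) ≤ frk(M') + μ(M'') + dim(R). -/
/-- The minimal number of generators of a module. -/
noncomputable def mu (R M : Type*) [Ring R] [AddCommGroup M] [Module R M] : ℕ :=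
  sInf {n : ℕ | ∃ s : Finset M, s.card = n ∧ Submodule.span R (s : Set M) = ⊤}

/-!
Write `n = μ(M'') + d` and suppose that `M` surjects onto `Rⁿ × R^t`. The cokernel `C` of the
induced map `M' → Rⁿ × R^t` is a quotient of `M''`, so `dim κ(P) ⊗ C + dim R/P ≤ n` for every prime
`P` in the support of `C`. The claim is that some linear map `Rⁿ × R^t → R^t` is still surjective on
the image of `M'`, i.e. on the kernel of `Rⁿ × R^t → C`; then `R^t` is a free summand of `M'`.

The `n` coordinates are removed one at a time. By prime avoidance, the first basis vector can be
changed by a combination of the others so that its image `x` in `C` is nonzero in the fibres at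
finitely many given primes of the support. Choose these to be the generic points of the components
of the closed sets `{Q | m ≤ dim κ(Q) ⊗ C}`, `m ≥ 1`. If `x` is nonzero in the fibre at `Q`, passing
to `C / Rx` lowers `dim κ(Q) ⊗ C`; if not, then `Q` strictly contains one of the chosen primes `P`
with `dim κ(Q) ⊗ C ≤ dim κ(P) ⊗ C`, and `dim R/Q < dim R/P`. Either way the bound drops to `n - 1`,
and once it reaches `0` the cokernel vanishes.
-/

open TopologicalSpace Module

section NoetherianSpace

variable {X : Type*} [TopologicalSpace X] [NoetherianSpace X] [QuasiSober X]

theorem exists_finset_subset_specializes_of_isClosed {Z : Set X} (hZ : IsClosed Z) :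
    ∃ T : Finset X, ↑T ⊆ Z ∧ ∀ x ∈ Z, ∃ t ∈ T, t ⤳ x := by
  classical
  obtain ⟨S, hSfin, hSclosed, hSirr, rfl⟩ :=
    NoetherianSpace.exists_finite_set_isClosed_irreducible hZ
  have hgen : ∀ K : S, ∃ t, IsGenericPoint t (K : Set X) := fun K ↦
    ⟨_, (hSirr K K.2).isGenericPoint_genericPoint (hSclosed K K.2)⟩
  choose η hη using hgen
  have := hSfin.to_subtype
  refine ⟨(Set.finite_range η).toFinset, ?_, ?_⟩
  · rw [Set.Finite.coe_toFinset]
    rintro _ ⟨K, rfl⟩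
    exact ⟨K, K.2, (hη K).mem⟩
  · rintro x ⟨K, hK, hx⟩
    exact ⟨η ⟨K, hK⟩, by simp, (hη ⟨K, hK⟩).specializes hx⟩

theorem exists_finset_specializes_and_le {f : X → ℕ} (hf : UpperSemicontinuous f) :
    ∃ T : Finset X, ∀ x, ∃ t ∈ T, t ⤳ x ∧ f x ≤ f t := by
  classical
  obtain ⟨m, hm⟩ := (hf.upperSemicontinuousOn Set.univ).bddAbove_of_isCompact isCompact_univ
  choose T hTsub hT using fun j ↦
    exists_finset_subset_specializes_of_isClosed (upperSemicontinuous_iff_isClosed_preimage.1 hf j)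
  refine ⟨(Finset.range (m + 1)).biUnion T, fun x ↦ ?_⟩
  obtain ⟨t, ht, htx⟩ := hT (f x) x (Set.mem_preimage.2 Set.self_mem_Ici)
  have hxm : f x ∈ Finset.range (m + 1) :=
    Finset.mem_range_succ_iff.2 (hm (Set.mem_image_of_mem f (Set.mem_univ x)))
  exact ⟨t, Finset.mem_biUnion.2 ⟨f x, hxm, ht⟩, htx, hTsub _ ht⟩

end NoetherianSpace

section Fiber

variable {R C : Type*} [CommRing R] [AddCommGroup C] [Module R C] {P : PrimeSpectrum R}

theorem exists_notMem_and_forall_mem_asIdeal {T : Finset (PrimeSpectrum R)}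
    (hT : ∀ Q ∈ T, ¬ Q ≤ P) : ∃ b ∉ P.asIdeal, ∀ Q ∈ T, b ∈ Q.asIdeal := by
  have hinf : ¬ T.inf PrimeSpectrum.asIdeal ≤ P.asIdeal := fun hle ↦
    let ⟨Q, hQ, hQP⟩ := P.isPrime.inf_le'.1 hle
    hT Q hQ hQP
  obtain ⟨b, hb, hbP⟩ := SetLike.not_le_iff_exists.1 hinf
  exact ⟨b, hbP, Submodule.mem_finsetInf.1 hb⟩

/-- The canonical map `x ↦ 1 ⊗ x` from a module `C` to its fibre `κ(P) ⊗ C` at the prime `P`. -/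
noncomputable def fiberMk {R : Type*} [CommRing R] (P : PrimeSpectrum R) (C : Type*)
    [AddCommGroup C] [Module R C] : C →ₗ[R] P.asIdeal.Fiber C :=
  TensorProduct.mk R P.asIdeal.ResidueField C 1

/-- The dimension of the fibre `κ(P) ⊗ C` over the residue field `κ(P)`. For finitely generated `C`
this is `μ(C_P)`, by Nakayama's lemma. -/
noncomputable def fiberRank {R : Type*} [CommRing R] (P : PrimeSpectrum R) (C : Type*)
    [AddCommGroup C] [Module R C] : ℕ :=
  finrank P.asIdeal.ResidueField (P.asIdeal.Fiber C)

theorem fiberMk_smul_eq_zero_iff {b : R} {x : C} :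
    fiberMk P C (b • x) = 0 ↔ b ∈ P.asIdeal ∨ fiberMk P C x = 0 := by
  rw [map_smul, ← algebraMap_smul P.asIdeal.ResidueField b, smul_eq_zero,
    Ideal.algebraMap_residueField_eq_zero]

theorem exists_mem_forall_fiberMk_add_ne_zero {N : Submodule R C} {z : C}
    (T : Finset (PrimeSpectrum R))
    (hT : ∀ P ∈ T, ¬ N ⊔ Submodule.span R {z} ≤ LinearMap.ker (fiberMk P C)) :
    ∃ y ∈ N, ∀ P ∈ T, fiberMk P C (z + y) ≠ 0 := by
  classical
  induction T using Finset.eraseInduction with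
  | H T ih =>
    obtain rfl | hTne := T.eq_empty_or_nonempty
    · exact ⟨0, N.zero_mem, by simp⟩
    obtain ⟨P, hP⟩ := T.exists_minimal hTne
    obtain ⟨y, hy, hyT⟩ := ih P hP.1 fun Q hQ ↦ hT Q (Finset.mem_of_mem_erase hQ)
    by_cases hPzy : fiberMk P C (z + y) = 0
    · obtain ⟨w, hw, hwP⟩ : ∃ w ∈ N, fiberMk P C w ≠ 0 := by
        by_contra! hN
        refine hT P hP.1 (sup_le hN ((Submodule.span_singleton_le_iff_mem _ _).2 ?_))
        rwa [map_add, hN y hy, add_zero] at hPzy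
      -- By minimality of `P`, adding `b • w` changes the fibre at `P` but no other fibre in `T`.
      obtain ⟨b, hbP, hbT⟩ := exists_notMem_and_forall_mem_asIdeal (P := P) (T := T.erase P)
        fun Q hQ hQP ↦ (Finset.mem_erase.1 hQ).1 (hP.eq_of_le (Finset.mem_erase.1 hQ).2 hQP)
      refine ⟨y + b • w, add_mem hy (N.smul_mem b hw), fun Q hQ ↦ ?_⟩
      rw [← add_assoc, map_add]
      obtain rfl | hQP := eq_or_ne Q P
      · rw [hPzy, zero_add, Ne, fiberMk_smul_eq_zero_iff]
        exact not_or.2 ⟨hbP, hwP⟩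
      · have hQT : Q ∈ T.erase P := Finset.mem_erase.2 ⟨hQP, hQ⟩
        rw [fiberMk_smul_eq_zero_iff.2 (.inl (hbT Q hQT)), add_zero]
        exact hyT Q hQT
    · refine ⟨y, hy, fun Q hQ ↦ ?_⟩
      obtain rfl | hQP := eq_or_ne Q P
      · exact hPzy
      · exact hyT Q (Finset.mem_erase.2 ⟨hQP, hQ⟩)

variable (P C) in
theorem span_range_fiberMk :
    Submodule.span P.asIdeal.ResidueField (Set.range (fiberMk P C)) = ⊤ := by
  rw [← Submodule.baseChange_top, Submodule.baseChange_eq_span, Submodule.map_top,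
    LinearMap.coe_range]
  rfl

theorem ker_baseChange_mkQ (A : Type*) [CommRing A] [Algebra R A] (N : Submodule R C) :
    LinearMap.ker (N.mkQ.baseChange A) = N.baseChange A := by
  have hexact : Function.Exact (N.subtype.baseChange A) (N.mkQ.baseChange A) :=
    lTensor_exact A (LinearMap.exact_subtype_mkQ N) N.mkQ_surjective
  exact hexact.linearMap_ker_eq

variable [Module.Finite R C]

theorem fiberRank_pos_iff : 0 < fiberRank P C ↔ P ∈ support R C := by
  rw [mem_support_iff_nontrivial_residueField_tensorProduct]
  exact finrank_pos_iff

theorem ker_fiberMk_ne_top (hP : P ∈ support R C) : LinearMap.ker (fiberMk P C) ≠ ⊤ := by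
  intro htop
  have := (mem_support_iff_nontrivial_residueField_tensorProduct P).1 hP
  apply bot_ne_top (α := Submodule P.asIdeal.ResidueField (P.asIdeal.Fiber C))
  rw [← span_range_fiberMk, eq_comm, Submodule.span_eq_bot]
  rintro _ ⟨x, rfl⟩
  exact LinearMap.congr_fun (LinearMap.ker_eq_top.1 htop) x

variable (P) in
theorem fiberRank_quotient_add (N : Submodule R C) :
    fiberRank P (C ⧸ N) + finrank P.asIdeal.ResidueField (N.baseChange P.asIdeal.ResidueField) =
      fiberRank P C := by
  rw [fiberRank, fiberRank, ← ker_baseChange_mkQ,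
    ← LinearMap.finrank_range_add_finrank_ker (N.mkQ.baseChange P.asIdeal.ResidueField),
    LinearMap.range_eq_top.2 (LinearMap.baseChange_surjective _ N.mkQ_surjective), finrank_top]

theorem fiberRank_quotient_span_singleton_add_one {x : C} (hx : fiberMk P C x ≠ 0) :
    fiberRank P (C ⧸ Submodule.span R {x}) + 1 = fiberRank P C := by
  rw [← fiberRank_quotient_add P (Submodule.span R {x}), Submodule.baseChange_span,
    Set.image_singleton, finrank_span_singleton]
  exact hx

theorem fiberRank_le_of_surjective {D : Type*} [AddCommGroup D] [Module R D] (q : C →ₗ[R] D)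
    (hq : Function.Surjective q) : fiberRank P D ≤ fiberRank P C :=
  LinearMap.finrank_le_finrank_of_surjective (LinearMap.baseChange_surjective _ hq)

theorem fiberRank_le_card_of_notMem_support {ι : Type*} [Fintype ι] (c : ι → C)
    (hP : P ∉ support R (C ⧸ Submodule.span R (Set.range c))) :
    fiberRank P C ≤ Fintype.card ι := by
  have hzero : fiberRank P (C ⧸ Submodule.span R (Set.range c)) = 0 :=
    Nat.eq_zero_of_not_pos (mt fiberRank_pos_iff.1 hP)
  rw [← fiberRank_quotient_add P (Submodule.span R (Set.range c)), hzero, zero_add,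
    Submodule.baseChange_span, ← Set.range_comp]
  exact finrank_range_le_card _

theorem exists_notMem_support_quotient_span_range (P : PrimeSpectrum R) :
    ∃ c : Fin (fiberRank P C) → C, P ∉ support R (C ⧸ Submodule.span R (Set.range c)) := by
  have hexists := Submodule.exists_fun_fin_finrank_span_eq P.asIdeal.ResidueField
    (Set.range (fiberMk P C))
  rw [span_range_fiberMk, finrank_top] at hexists
  obtain ⟨v, hv, hvspan, -⟩ := hexists
  choose c hc using hv
  refine ⟨c, fun hP ↦ (fiberRank_pos_iff.2 hP).ne' ?_⟩
  have hc_span : (Submodule.span R (Set.range c)).baseChange P.asIdeal.ResidueField = ⊤ := by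
    rw [Submodule.baseChange_span, ← Set.range_comp, ← hvspan, ← funext hc]
    rfl
  have hadd := fiberRank_quotient_add P (Submodule.span R (Set.range c))
  rw [hc_span, finrank_top] at hadd
  exact Nat.add_eq_right.1 hadd

variable (R C) in
theorem upperSemicontinuous_fiberRank :
    UpperSemicontinuous fun P : PrimeSpectrum R ↦ fiberRank P C := by
  intro P n hn
  obtain ⟨c, hc⟩ := exists_notMem_support_quotient_span_range (C := C) P
  filter_upwards [isClosed_support.isOpen_compl.mem_nhds hc] with Q hQ
  calc fiberRank Q C ≤ Fintype.card (Fin (fiberRank P C)) :=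
        fiberRank_le_card_of_notMem_support c hQ
    _ = fiberRank P C := Fintype.card_fin _
    _ < n := hn

end Fiber

section ForsterSwanBound

variable {R C : Type*} [CommRing R] [AddCommGroup C] [Module R C]

/-- The Forster–Swan bound on the number of generators of `C`: the supremum over the support of `C`
of `dim κ(P) ⊗ C + dim R/P`, where `dim R/P` is encoded as `Order.coheight P`. -/
noncomputable def forsterSwanBound (R C : Type*) [CommRing R] [AddCommGroup C] [Module R C] : ℕ∞ :=
  ⨆ P ∈ support R C, (fiberRank P C : ℕ∞) + Order.coheight P

theorem forsterSwanBound_le_iff {n : ℕ∞} :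
    forsterSwanBound R C ≤ n ↔ ∀ P ∈ support R C, fiberRank P C + Order.coheight P ≤ n :=
  iSup₂_le_iff

theorem fiberRank_add_coheight_le_forsterSwanBound {P : PrimeSpectrum R} (hP : P ∈ support R C) :
    fiberRank P C + Order.coheight P ≤ forsterSwanBound R C :=
  forsterSwanBound_le_iff.1 le_rfl P hP

variable [Module.Finite R C]

theorem forsterSwanBound_le_of_surjective {D : Type*} [AddCommGroup D] [Module R D]
    (q : C →ₗ[R] D) (hq : Function.Surjective q) :
    forsterSwanBound R D ≤ forsterSwanBound R C := by
  refine forsterSwanBound_le_iff.2 fun P hP ↦ ?_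
  calc (fiberRank P D : ℕ∞) + Order.coheight P ≤ fiberRank P C + Order.coheight P := by
        gcongr
        exact fiberRank_le_of_surjective q hq
    _ ≤ forsterSwanBound R C :=
        fiberRank_add_coheight_le_forsterSwanBound (support_subset_of_surjective q hq hP)

theorem subsingleton_of_forsterSwanBound_eq_zero (h : forsterSwanBound R C = 0) :
    Subsingleton C := by
  refine (support_eq_empty_iff (R := R)).1 (Set.eq_empty_of_forall_notMem fun P hP ↦ ?_)
  have hzero : (fiberRank P C : ℕ∞) + Order.coheight P = 0 :=
    nonpos_iff_eq_zero.1 ((fiberRank_add_coheight_le_forsterSwanBound hP).trans_eq h)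
  exact (fiberRank_pos_iff.2 hP).ne' (Nat.cast_eq_zero.1 (add_eq_zero.1 hzero).1)

theorem forsterSwanBound_quotient_span_singleton_le {n : ℕ∞} (h : forsterSwanBound R C ≤ n + 1)
    {x : C} (hx : ∀ Q ∈ support R C, ∃ P ≤ Q, fiberRank Q C ≤ fiberRank P C ∧ fiberMk P C x ≠ 0) :
    forsterSwanBound R (C ⧸ Submodule.span R {x}) ≤ n := by
  refine forsterSwanBound_le_iff.2 fun Q hQ ↦ ?_
  have hmkQ := (Submodule.span R {x}).mkQ_surjective
  have hQC : Q ∈ support R C := support_subset_of_surjective _ hmkQ hQ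
  refine (ENat.add_le_add_iff_right ENat.one_ne_top).1 (le_trans ?_ h)
  by_cases hxQ : fiberMk Q C x = 0
  · obtain ⟨P, hPQ, hrank, hxP⟩ := hx Q hQC
    have hPC : P ∈ support R C := fiberRank_pos_iff.1 ((fiberRank_pos_iff.2 hQC).trans_le hrank)
    have hlt : P < Q := hPQ.lt_of_ne fun hPQ ↦ hxP (hPQ ▸ hxQ)
    calc (fiberRank Q (C ⧸ Submodule.span R {x}) : ℕ∞) + Order.coheight Q + 1
        ≤ fiberRank P C + Order.coheight P := by
          rw [add_assoc]
          gcongr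
          · exact (fiberRank_le_of_surjective _ hmkQ).trans hrank
          · exact Order.coheight_add_one_le hlt
      _ ≤ forsterSwanBound R C := fiberRank_add_coheight_le_forsterSwanBound hPC
  · calc (fiberRank Q (C ⧸ Submodule.span R {x}) : ℕ∞) + Order.coheight Q + 1
        = fiberRank Q C + Order.coheight Q := by
          rw [← fiberRank_quotient_span_singleton_add_one hxQ]
          push_cast
          ring
      _ ≤ forsterSwanBound R C := fiberRank_add_coheight_le_forsterSwanBound hQC

theorem exists_mem_forsterSwanBound_quotient_span_add_le [NoetherianSpace (PrimeSpectrum R)]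
    {n : ℕ∞} (h : forsterSwanBound R C ≤ n + 1) {N : Submodule R C} {z : C}
    (hN : N ⊔ Submodule.span R {z} = ⊤) :
    ∃ y ∈ N, forsterSwanBound R (C ⧸ Submodule.span R {z + y}) ≤ n := by
  classical
  obtain ⟨T, hT⟩ := exists_finset_specializes_and_le (upperSemicontinuous_fiberRank R C)
  obtain ⟨y, hy, hyT⟩ := exists_mem_forall_fiberMk_add_ne_zero (T.filter (· ∈ support R C))
    (N := N) (z := z) fun P hP ↦ by
      rw [hN, top_le_iff]
      exact ker_fiberMk_ne_top (Finset.mem_filter.1 hP).2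
  refine ⟨y, hy, forsterSwanBound_quotient_span_singleton_le h fun Q hQ ↦ ?_⟩
  obtain ⟨P, hPT, hPQ, hrank⟩ := hT Q
  have hP : P ∈ support R C := fiberRank_pos_iff.1 ((fiberRank_pos_iff.2 hQ).trans_le hrank)
  exact ⟨P, (PrimeSpectrum.le_iff_specializes P Q).2 hPQ, hrank,
    hyT P (Finset.mem_filter.2 ⟨hPT, hP⟩)⟩

end ForsterSwanBound

section MinimalNumberOfGenerators

theorem exists_finset_card_eq_mu (R C : Type*) [Ring R] [AddCommGroup C] [Module R C]
    [Module.Finite R C] :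
    ∃ s : Finset C, s.card = mu R C ∧ Submodule.span R (s : Set C) = ⊤ :=
  have ⟨s, hs⟩ := Module.Finite.fg_top (R := R) (M := C)
  Nat.sInf_mem (s := {n : ℕ | ∃ s : Finset C, s.card = n ∧ Submodule.span R (s : Set C) = ⊤})
    ⟨s.card, s, rfl, hs⟩

variable {R C : Type*} [CommRing R] [AddCommGroup C] [Module R C] [Module.Finite R C]

theorem fiberRank_le_mu (P : PrimeSpectrum R) : fiberRank P C ≤ mu R C := by
  obtain ⟨s, hcard, hs⟩ := exists_finset_card_eq_mu R C
  have hrange : Submodule.span R (Set.range ((↑) : s → C)) = ⊤ := by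
    rw [Subtype.range_coe_subtype]
    exact hs
  rw [← hcard, ← Fintype.card_coe s]
  refine fiberRank_le_card_of_notMem_support ((↑) : s → C) ?_
  rw [hrange, support_eq_empty]
  exact Set.notMem_empty P

theorem forsterSwanBound_le_mu_add {d : ℕ} (hd : ringKrullDim R ≤ d) :
    forsterSwanBound R C ≤ mu R C + d := by
  refine forsterSwanBound_le_iff.2 fun P _ ↦ ?_
  have hP : Order.coheight P ≤ d := by exact_mod_cast (Order.coheight_le_krullDim P).trans hd
  gcongr
  exact fiberRank_le_mu P

end MinimalNumberOfGenerators

section Shear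

variable {R C E G : Type*} [Ring R] [AddCommGroup C] [Module R C] [AddCommGroup E] [Module R E]
  [AddCommGroup G] [Module R G]

theorem surjective_mkQ_comp_inr {π : R × G →ₗ[R] C} (hπ : Function.Surjective π) (a : G) :
    Function.Surjective
      ((Submodule.span R {π (1, a)}).mkQ ∘ₗ π ∘ₗ LinearMap.inr R R G) := by
  intro w
  obtain ⟨x, rfl⟩ := Submodule.mkQ_surjective _ w
  obtain ⟨⟨b, g⟩, rfl⟩ := hπ x
  refine ⟨g - b • a, (Submodule.Quotient.eq _).2 (Submodule.mem_span_singleton.2 ⟨-b, ?_⟩)⟩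
  simp only [LinearMap.comp_apply, LinearMap.inr_apply, ← map_smul, ← map_sub]
  simp

-- `(b, g) ↦ g - b • a` is the quotient map of `R × G` by the vector `(1, a)`.
theorem map_ker_comp_snd_sub_eq_top (π : R × G →ₗ[R] C) (a : G) {p : G →ₗ[R] E}
    (hp : (LinearMap.ker ((Submodule.span R {π (1, a)}).mkQ ∘ₗ π ∘ₗ LinearMap.inr R R G)).map p =
      ⊤) :
    (LinearMap.ker π).map
      (p ∘ₗ (LinearMap.snd R R G - (LinearMap.fst R R G).smulRight a)) = ⊤ := by
  refine eq_top_iff.2 fun v _ ↦ ?_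
  obtain ⟨g, hg, rfl⟩ : v ∈ Submodule.map p _ := hp ▸ Submodule.mem_top
  obtain ⟨b, hb⟩ : ∃ b : R, b • π (1, a) = π (0, g) :=
    Submodule.mem_span_singleton.1 ((Submodule.Quotient.mk_eq_zero _).1 hg)
  refine ⟨(0, g) - b • (1, a), ?_, by simp⟩
  rw [SetLike.mem_coe, LinearMap.mem_ker, map_sub, map_smul, hb, sub_self]

end Shear

section Splitting

variable {R C E : Type*} [CommRing R] [AddCommGroup C] [Module R C] [AddCommGroup E] [Module R E]

theorem exists_forsterSwanBound_quotient_span_le [NoetherianSpace (PrimeSpectrum R)]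
    [Module.Finite R C] {G : Type*} [AddCommGroup G] [Module R G] {n : ℕ∞}
    (h : forsterSwanBound R C ≤ n + 1) {π : R × G →ₗ[R] C} (hπ : Function.Surjective π) :
    ∃ a : G, forsterSwanBound R (C ⧸ Submodule.span R {π (1, a)}) ≤ n := by
  have hsup : LinearMap.range (π ∘ₗ LinearMap.inr R R G) ⊔ Submodule.span R {π (1, 0)} = ⊤ := by
    refine eq_top_iff.2 fun x _ ↦ ?_
    obtain ⟨⟨b, g⟩, rfl⟩ := hπ x
    refine Submodule.mem_sup.2 ⟨π (0, g), ⟨g, rfl⟩, b • π (1, 0),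
      Submodule.smul_mem _ b (Submodule.mem_span_singleton_self _), ?_⟩
    rw [← map_smul, ← map_add]
    simp
  obtain ⟨_, ⟨a, rfl⟩, ha⟩ := exists_mem_forsterSwanBound_quotient_span_add_le h hsup
  have hadd : π (1, 0) + (π ∘ₗ LinearMap.inr R R G) a = π (1, a) := by
    simp [← map_add]
  exact ⟨a, hadd ▸ ha⟩

theorem exists_map_ker_eq_top [NoetherianSpace (PrimeSpectrum R)] [Module.Finite R C] {n : ℕ}
    (h : forsterSwanBound R C ≤ n) {π : (Fin n → R) × E →ₗ[R] C} (hπ : Function.Surjective π) :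
    ∃ p : (Fin n → R) × E →ₗ[R] E, (LinearMap.ker π).map p = ⊤ := by
  induction n generalizing C with
  | zero =>
    have := subsingleton_of_forsterSwanBound_eq_zero (nonpos_iff_eq_zero.1 h)
    refine ⟨LinearMap.snd R _ E, ?_⟩
    rw [Subsingleton.elim π 0, LinearMap.ker_zero, Submodule.map_top, Submodule.range_snd]
  | succ n ih =>
    let e : (R × (Fin n → R) × E) ≃ₗ[R] (Fin (n + 1) → R) × E :=
      (LinearEquiv.prodAssoc R R (Fin n → R) E).symm ≪≫ₗ
        (Fin.consLinearEquiv R fun _ ↦ R).prodCongr (LinearEquiv.refl R E)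
    have hπe : Function.Surjective (π ∘ₗ e.toLinearMap) := hπ.comp e.surjective
    obtain ⟨a, ha⟩ := exists_forsterSwanBound_quotient_span_le (n := n) (mod_cast h) hπe
    obtain ⟨p, hp⟩ := ih ha (surjective_mkQ_comp_inr hπe a)
    have hsplit := map_ker_comp_snd_sub_eq_top (π ∘ₗ e.toLinearMap) a hp
    refine ⟨p ∘ₗ (LinearMap.snd R R _ - (LinearMap.fst R R _).smulRight a) ∘ₗ
      e.symm.toLinearMap, ?_⟩
    rw [← hsplit, LinearMap.ker_comp, ← LinearMap.comp_assoc, Submodule.map_comp]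
    congr 1
    exact Submodule.map_equiv_eq_comap_symm e.symm _

theorem exists_surjective_of_exact_of_forsterSwanBound_le [NoetherianSpace (PrimeSpectrum R)]
    {M' M M'' : Type*} [AddCommGroup M'] [Module R M'] [AddCommGroup M] [Module R M]
    [AddCommGroup M''] [Module R M''] [Module.Finite R M''] {n : ℕ}
    (h : forsterSwanBound R M'' ≤ n) {f : M' →ₗ[R] M} {g : M →ₗ[R] M''}
    (hg : Function.Surjective g) (hexact : Function.Exact f g)
    {p : M →ₗ[R] (Fin n → R) × E} (hp : Function.Surjective p) :
    ∃ q : M' →ₗ[R] E, Function.Surjective q := by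
  let π := (LinearMap.range (p ∘ₗ f)).mkQ
  have hπ : Function.Surjective π := Submodule.mkQ_surjective _
  have hle : LinearMap.range f ≤ (LinearMap.range (p ∘ₗ f)).comap p := by
    rw [LinearMap.range_comp]
    exact Submodule.le_comap_map p _
  let γ : M'' →ₗ[R] _ :=
    (LinearMap.range f).mapQ (LinearMap.range (p ∘ₗ f)) p hle ∘ₗ
      (hexact.linearEquivOfSurjective hg).symm.toLinearMap
  have hγ : Function.Surjective γ := by
    rw [← LinearMap.range_eq_top, LinearEquiv.range_comp, Submodule.range_mapQ,
      LinearMap.range_eq_top.2 hp, Submodule.map_top, Submodule.range_mkQ]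
  have := Module.Finite.of_surjective γ hγ
  obtain ⟨r, hr⟩ := exists_map_ker_eq_top
    ((forsterSwanBound_le_of_surjective γ hγ).trans h) hπ
  refine ⟨r ∘ₗ p ∘ₗ f, LinearMap.range_eq_top.1 ?_⟩
  rw [LinearMap.range_comp, ← hr, Submodule.ker_mkQ]

end Splitting

section FreeRank

theorem exists_isCompl_and_nonempty_linearEquiv_iff {R M F : Type*} [Ring R] [AddCommGroup M]
    [Module R M] [AddCommGroup F] [Module R F] [Projective R F] :
    (∃ N N' : Submodule R M, IsCompl N N' ∧ Nonempty (N ≃ₗ[R] F)) ↔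
      ∃ p : M →ₗ[R] F, Function.Surjective p := by
  constructor
  · rintro ⟨N, N', hN, ⟨e⟩⟩
    exact ⟨e.toLinearMap ∘ₗ N.projectionOnto N' hN,
      e.surjective.comp (Submodule.projectionOnto_surjective hN)⟩
  · rintro ⟨p, hp⟩
    obtain ⟨i, hi⟩ := projective_lifting_property p LinearMap.id hp
    have hpi : Function.LeftInverse p i := LinearMap.congr_fun hi
    refine ⟨LinearMap.range i, LinearMap.ker (i.rangeRestrict ∘ₗ p),
      LinearMap.isCompl_of_proj ?_, ⟨(LinearEquiv.ofInjective i hpi.injective).symm⟩⟩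
    rintro ⟨_, v, rfl⟩
    exact Subtype.ext (congrArg i (hpi v))

theorem le_frk_iff {R M : Type*} [Ring R] [RankCondition R] [AddCommGroup M] [Module R M]
    [Module.Finite R M] {n : ℕ} :
    n ≤ frk R M ↔ ∃ p : M →ₗ[R] (Fin n → R), Function.Surjective p := by
  simp only [frk, exists_isCompl_and_nonempty_linearEquiv_iff]
  have hbdd : BddAbove {n : ℕ | ∃ p : M →ₗ[R] (Fin n → R), Function.Surjective p} := by
    obtain ⟨k, π, hπ⟩ := Module.Finite.exists_fin' R M
    exact ⟨k, fun n ⟨p, hp⟩ ↦ le_of_fin_surjective R (p ∘ₗ π) (hp.comp hπ)⟩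
  refine ⟨fun hn ↦ ?_, fun hn ↦ le_csSup hbdd hn⟩
  obtain ⟨p, hp⟩ := Nat.sSup_mem (s := {n : ℕ | ∃ p : M →ₗ[R] (Fin n → R), Function.Surjective p})
    ⟨0, 0, Function.surjective_to_subsingleton _⟩ hbdd
  exact ⟨LinearMap.funLeft R R (Fin.castLE hn) ∘ₗ p,
    (LinearMap.funLeft_surjective_of_injective R R _ (Fin.castLE_injective hn)).comp hp⟩

theorem frk_le_frk_add_of_forsterSwanBound_le {R M' M M'' : Type*} [CommRing R] [Nontrivial R]
    [NoetherianSpace (PrimeSpectrum R)] [AddCommGroup M'] [Module R M'] [AddCommGroup M]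
    [Module R M] [AddCommGroup M''] [Module R M''] [Module.Finite R M'] [Module.Finite R M]
    {f : M' →ₗ[R] M} {g : M →ₗ[R] M''} (hg : Function.Surjective g) (hexact : Function.Exact f g)
    {n : ℕ} (h : forsterSwanBound R M'' ≤ n) : frk R M ≤ frk R M' + n := by
  have := Module.Finite.of_surjective g hg
  obtain hlt | hle := lt_or_ge (frk R M) n
  · omega
  obtain ⟨t, ht⟩ := Nat.exists_eq_add_of_le hle
  obtain ⟨p, hp⟩ := le_frk_iff.1 ht.ge
  let e : (Fin (n + t) → R) ≃ₗ[R] (Fin n → R) × (Fin t → R) :=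
    LinearEquiv.funCongrLeft R R finSumFinEquiv ≪≫ₗ LinearEquiv.sumArrowLequivProdArrow _ _ R R
  have hM' : t ≤ frk R M' := le_frk_iff.2 <|
    exists_surjective_of_exact_of_forsterSwanBound_le h hg hexact
      (p := e.toLinearMap ∘ₗ p) (e.surjective.comp hp)
  omega

end FreeRank

theorem frk_right_exact_global_general {R : Type*} [CommRing R]
    [NoetherianSpace (PrimeSpectrum R)] (d : ℕ) (hd : ringKrullDim R = d)
    {M' M M'' : Type*} [AddCommGroup M'] [Module R M'] [AddCommGroup M] [Module R M]
    [AddCommGroup M''] [Module R M''] [Module.Finite R M'] [Module.Finite R M]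
    (f : M' →ₗ[R] M) (g : M →ₗ[R] M'')
    (hg : Function.Surjective g) (hexact : Function.Exact f g) :
    frk R M ≤ frk R M' + mu R M'' + d := by
  have : Nontrivial R := by
    by_contra hR
    have := not_nontrivial_iff_subsingleton.1 hR
    simp [ringKrullDim_eq_bot_of_subsingleton] at hd
  have := Module.Finite.of_surjective g hg
  rw [add_assoc]
  exact frk_le_frk_add_of_forsterSwanBound_le hg hexact (mod_cast forsterSwanBound_le_mu_add hd.le)

/-- For a right exact sequence `M' → M → M'' → 0` of finitely generated modules over a
Noetherian ring of finite Krull dimension `d`, `frk(M) ≤ frk(M') + μ(M'') + d`. -/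
theorem frk_right_exact_global {R : Type*} [CommRing R] [IsNoetherianRing R] (d : ℕ)
    (hd : ringKrullDim R = d)
    {M' M M'' : Type*} [AddCommGroup M'] [Module R M'] [AddCommGroup M] [Module R M]
    [AddCommGroup M''] [Module R M''] [Module.Finite R M'] [Module.Finite R M]
    [Module.Finite R M''] (f : M' →ₗ[R] M) (g : M →ₗ[R] M'')
    (hg : Function.Surjective g) (hexact : Function.Exact f g) :
    frk R M ≤ frk R M' + mu R M'' + d :=
  frk_right_exact_global_general d hd f g hg hexact
end
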